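/- If dim_ℂ E = 2 and the symmetric quadrilinear form S satisfies the invariance condition, then there exist c ∈ ℂ and e ∈ E such that S(x₁,x₂,x₃,x₄) = c·ω(x₁,e)·ω(x₂,e)·ω(x₃,e)·ω(x₄,e) for all x₁,x₂,x₃,x₄ ∈ E. (This is the algebraic content of the statement that, up to isomorphism, there is exactly one non-flat simply connected complex hyper-Kähler symmetric space of dimension 4, namely the one associated with the quartic S = e⁴.) -/

import Mathlib

/-!
For `x ∈ E` put `A = S_{x,x}`. The invariance of `S` under `A`, evaluated at `(x, x, x, y)`, amounts
to `S(x, x, x, A y) = 0`. This is `ω (A x) (A y) = det A * ω x y`, so `A ^ 2 = -det A = 0`.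
If `S ≠ 0`, polarization provides `x` and `f` with `ω (A f) f = S(x, x, f, f) ≠ 0`. With `e = A f`,
the endomorphism `A` is then a nonzero multiple of `ω(·, e) e`, and its invariance says that the
symmetric product of `ω(·, e)` and `S(e, ·, ·, ·)` vanishes. Hence `S(e, ·, ·, ·) = 0`, and `S`
comes from the line `E / ⟨e⟩`, on which every quartic form is a multiple of `ω(·, e) ^ 4`.
-/

section Plane

variable {R E M : Type*} [CommRing R] [AddCommGroup E] [Module R E]
  [Module.Free R E] [AddCommGroup M] [Module R M] {ω : E →ₗ[R] E →ₗ[R] R}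

lemma cyclic_sum_smul_eq_zero_of_isAlt [Nontrivial R] (hω : ω.IsAlt)
    (hdim : Module.finrank R E = 2) (u v w : E) :
    ω u v • w + ω v w • u + ω w u • v = 0 := by
  have : Module.Finite R E := Module.finite_of_finrank_pos (by lia)
  let b := Module.finBasisOfFinrankEq R E hdim
  have hb : ω (b 1) (b 0) = -ω (b 0) (b 1) := (hω.neg _ _).symm
  rw [← b.sum_repr u, ← b.sum_repr v, ← b.sum_repr w]
  simp only [Fin.sum_univ_two, map_add, map_smul, LinearMap.add_apply, LinearMap.smul_apply,
    smul_eq_mul, hω.self_eq_zero, hb]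
  module

lemma smul_map_eq_smul_map_of_isAlt_of_map_eq_zero [Nontrivial R] (hω : ω.IsAlt)
    (hdim : Module.finrank R E = 2) {e : E} (T : E →ₗ[R] M) (hT : T e = 0) (f x : E) :
    ω f e • T x = ω x e • T f := by
  have h := congrArg T (cyclic_sum_smul_eq_zero_of_isAlt hω hdim f e x)
  simp only [map_add, map_smul, map_neg, map_zero, hT, smul_zero, add_zero, ← hω.neg x e,
    neg_smul] at h
  exact add_neg_eq_zero.mp h

-- Cayley–Hamilton for `A`, whose trace is zero and whose determinant is `ω (A u) (A v) / ω u v`.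
lemma smul_apply_apply_of_isAlt_of_isSkewAdjoint [Nontrivial R] (hω : ω.IsAlt)
    (hdim : Module.finrank R E = 2) {A : Module.End R E} (hA : ω.IsSkewAdjoint A) (u v w : E) :
    ω u v • A (A w) = -ω (A u) (A v) • w := by
  have hA' (x y : E) : ω x (A y) = -ω (A x) y := by rw [hA x y]; simp
  have h₁ := congrArg A (cyclic_sum_smul_eq_zero_of_isAlt hω hdim u v (A w))
  have h₂ := cyclic_sum_smul_eq_zero_of_isAlt hω hdim (A u) (A v) w
  simp only [map_add, map_smul, map_zero, hA' v w, ← hω.neg u (A w), hA' u w] at h₁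
  rw [← hω.neg (A u) w] at h₂
  linear_combination (norm := module) h₁ + h₂

lemma separatingLeft_of_isAlt_of_ne_zero [IsDomain R] (hω : ω.IsAlt)
    (hdim : Module.finrank R E = 2) (hne : ω ≠ 0) : ω.SeparatingLeft := by
  intro x hx
  contrapose! hne
  ext u v
  have h := cyclic_sum_smul_eq_zero_of_isAlt hω hdim u v x
  rw [← hω.neg x v, hx, hx, neg_zero, zero_smul, zero_smul, add_zero, add_zero] at h
  exact (smul_eq_zero.mp h).resolve_right hne

end Plane

lemma eq_zero_of_sum_mul_erase_eq_zero {α R : Type*} [CommRing R] [NoZeroDivisors R]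
    (h2 : (2 : R) ≠ 0) (h3 : (3 : R) ≠ 0) {g : α → α → α → R} {l : α → R}
    (hlg : ∀ x y z w, l x * g y z w + l y * g x z w + l z * g x y w + l w * g x y z = 0)
    {f : α} (hf : l f ≠ 0) (x y z : α) : g x y z = 0 := by
  have hfff : g f f f = 0 := by
    have h : 2 * 2 * l f * g f f f = 0 := by linear_combination hlg f f f f
    simpa [h2, hf] using h
  have hxff (x : α) : g x f f = 0 := by
    have h : 3 * l f * g x f f = 0 := by linear_combination hlg x f f f - l x * hfff
    simpa [h3, hf] using h
  have hxyf (x y : α) : g x y f = 0 := by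
    have h : 2 * l f * g x y f = 0 := by
      linear_combination hlg x y f f - l x * hxff y - l y * hxff x
    simpa [h2, hf] using h
  have h : l f * g x y z = 0 := by
    linear_combination hlg x y z f - l x * hxyf y z - l y * hxyf x z - l z * hxyf x y
  exact (mul_eq_zero.mp h).resolve_left hf

/-- `S` is a symmetric quadrilinear form. Linearity is only asked for in the first argument, since
symmetry transports it to the others. -/
structure IsSymmQuadrilinear {R E : Type*} [CommRing R] [AddCommGroup E] [Module R E]
    (S : E → E → E → E → R) : Prop where
  isLinearMap : ∀ y z w : E, IsLinearMap R (fun x => S x y z w)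
  map_perm : ∀ (v : Fin 4 → E) (σ : Equiv.Perm (Fin 4)),
    S (v (σ 0)) (v (σ 1)) (v (σ 2)) (v (σ 3)) = S (v 0) (v 1) (v 2) (v 3)

/-- The derivation action of the endomorphism `A` on quadrilinear forms annihilates `S`. This is the
invariance condition for `A = S_{e,e'}`. -/
def IsAnnihilatedBy {R E : Type*} [CommRing R] [AddCommGroup E] [Module R E]
    (S : E → E → E → E → R) (A : Module.End R E) : Prop :=
  ∀ x₁ x₂ x₃ x₄ : E,
    S (A x₁) x₂ x₃ x₄ + S x₁ (A x₂) x₃ x₄ + S x₁ x₂ (A x₃) x₄ + S x₁ x₂ x₃ (A x₄) = 0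

namespace IsSymmQuadrilinear

section CommRing

variable {R E : Type*} [CommRing R] [AddCommGroup E] [Module R E] {S : E → E → E → E → R}
  {ω : E →ₗ[R] E →ₗ[R] R} {A : Module.End R E}

lemma swap₁₂ (hS : IsSymmQuadrilinear S) (x y z w : E) : S x y z w = S y x z w := by
  simpa [Equiv.swap_apply_def] using hS.map_perm ![y, x, z, w] (Equiv.swap 0 1)

lemma swap₂₃ (hS : IsSymmQuadrilinear S) (x y z w : E) : S x y z w = S x z y w := by
  simpa [Equiv.swap_apply_def] using hS.map_perm ![x, z, y, w] (Equiv.swap 1 2)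

lemma swap₃₄ (hS : IsSymmQuadrilinear S) (x y z w : E) : S x y z w = S x y w z := by
  simpa [Equiv.swap_apply_def] using hS.map_perm ![x, y, w, z] (Equiv.swap 2 3)

lemma swap_pairs (hS : IsSymmQuadrilinear S) (x y z w : E) : S x y z w = S z w x y := by
  rw [hS.swap₂₃, hS.swap₁₂, hS.swap₃₄, hS.swap₂₃]

lemma eq_zero_of_left_pair_eq_zero [NoZeroDivisors R] (hS : IsSymmQuadrilinear S)
    (h2 : (2 : R) ≠ 0) {z w : E} (h : ∀ x, S x x z w = 0) (x y : E) : S x y z w = 0 := by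
  have h_add (u : E) := (hS.isLinearMap u z w).map_add x y
  have hdouble : 2 * S x y z w = 0 := by
    linear_combination h (x + y) - h_add (x + y) - hS.swap₁₂ x (x + y) z w
      - hS.swap₁₂ y (x + y) z w - h_add x - h_add y - h x - h y + hS.swap₁₂ x y z w
  exact (mul_eq_zero.mp hdouble).resolve_left h2

lemma eq_zero_of_pairs_eq_zero [NoZeroDivisors R] (hS : IsSymmQuadrilinear S) (h2 : (2 : R) ≠ 0)
    (h : ∀ x y, S x x y y = 0) (x y z w : E) : S x y z w = 0 := by
  refine hS.eq_zero_of_left_pair_eq_zero h2 (fun u => ?_) x y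
  rw [hS.swap_pairs]
  exact hS.eq_zero_of_left_pair_eq_zero h2 (fun v => h v u) z w

lemma isSkewAdjoint (hS : IsSymmQuadrilinear S) (hω : ω.IsAlt) {e e' : E}
    (hA : ∀ x y, ω (A x) y = S e e' x y) : ω.IsSkewAdjoint A := fun x y =>
  calc ω (A x) y = ω (A y) x := by rw [hA, hA, hS.swap₃₄]
    _ = ω x ((-A) y) := by rw [← hω.neg, LinearMap.neg_apply, map_neg]

lemma self_self_self_apply_eq_zero_of_isAnnihilatedBy [NoZeroDivisors R] (hS : IsSymmQuadrilinear S)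
    (h2 : (2 : R) ≠ 0) (hω : ω.IsAlt) {x : E} (hA : ∀ y z, ω (A y) z = S x x y z)
    (hAS : IsAnnihilatedBy S A) (y : E) : S x x x (A y) = 0 := by
  have hskew : S x x (A x) y = -S x x x (A y) := by
    rw [← hA, ← hA, hS.isSkewAdjoint hω hA (A x) y, Pi.neg_apply, map_neg]
  have h₁ : S (A x) x x y = S x x (A x) y := by rw [hS.swap₁₂, hS.swap₂₃]
  have h₂ : S x (A x) x y = S x x (A x) y := hS.swap₂₃ ..
  have hdouble : 2 * S x x x (A y) = 0 := by
    linear_combination 3 * hskew + h₁ + h₂ - hAS x x x y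
  exact (mul_eq_zero.mp hdouble).resolve_left h2

end CommRing

section Plane

variable {R E : Type*} [CommRing R] [IsDomain R] [AddCommGroup E] [Module R E] [Module.Free R E]
  {S : E → E → E → E → R} {ω : E →ₗ[R] E →ₗ[R] R} {A : Module.End R E}

lemma apply_apply_eq_zero_of_isAnnihilatedBy (hS : IsSymmQuadrilinear S) (h2 : (2 : R) ≠ 0)
    (hω : ω.IsAlt) (hdim : Module.finrank R E = 2) {x : E}
    (hA : ∀ y z, ω (A y) z = S x x y z) (hAS : IsAnnihilatedBy S A) (hx : x ≠ 0) (hne : ω ≠ 0)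
    (w : E) : A (A w) = 0 := by
  obtain ⟨y, hxy⟩ : ∃ y, ω x y ≠ 0 := by
    contrapose! hx
    exact separatingLeft_of_isAlt_of_ne_zero hω hdim hne x hx
  have h : ω x y • A (A w) = 0 := by
    rw [smul_apply_apply_of_isAlt_of_isSkewAdjoint hω hdim (hS.isSkewAdjoint hω hA), hA,
      hS.self_self_self_apply_eq_zero_of_isAnnihilatedBy h2 hω hA hAS, neg_zero, zero_smul]
  exact (smul_eq_zero.mp h).resolve_left hxy

lemma apply_left_eq_zero_of_isAnnihilatedBy (hS : IsSymmQuadrilinear S) (h2 : (2 : R) ≠ 0)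
    (h3 : (3 : R) ≠ 0) (hω : ω.IsAlt) (hdim : Module.finrank R E = 2)
    (hAS : IsAnnihilatedBy S A) {f : E} (hAf : A (A f) = 0) (hf : ω f (A f) ≠ 0) (x y z : E) :
    S (A f) x y z = 0 := by
  have hS_map (u y z w : E) : ω f (A f) * S (A u) y z w = ω u (A f) * S (A f) y z w :=
    smul_map_eq_smul_map_of_isAlt_of_map_eq_zero hω hdim
      ((hS.isLinearMap y z w).mk' _ ∘ₗ A) (by simp [hAf, (hS.isLinearMap y z w).map_zero]) f u
  refine eq_zero_of_sum_mul_erase_eq_zero h2 h3 (g := S (A f)) (l := fun u => ω u (A f))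
    (fun x₁ x₂ x₃ x₄ => ?_) hf x y z
  have h₂ : S x₁ (A x₂) x₃ x₄ = S (A x₂) x₁ x₃ x₄ := hS.swap₁₂ ..
  have h₃ : S x₁ x₂ (A x₃) x₄ = S (A x₃) x₁ x₂ x₄ := by rw [hS.swap₂₃, hS.swap₁₂]
  have h₄ : S x₁ x₂ x₃ (A x₄) = S (A x₄) x₁ x₂ x₃ := by rw [hS.swap₃₄, hS.swap₂₃, hS.swap₁₂]
  have h := hAS x₁ x₂ x₃ x₄
  rw [h₂, h₃, h₄] at h
  linear_combination ω f (A f) * h - hS_map x₁ x₂ x₃ x₄ - hS_map x₂ x₁ x₃ x₄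
    - hS_map x₃ x₁ x₂ x₄ - hS_map x₄ x₁ x₂ x₃

lemma pow_four_mul_eq_of_left_eq_zero (hS : IsSymmQuadrilinear S) (hω : ω.IsAlt)
    (hdim : Module.finrank R E = 2) {e : E} (he : ∀ x y z, S e x y z = 0)
    (f x₁ x₂ x₃ x₄ : E) :
    ω f e ^ 4 * S x₁ x₂ x₃ x₄ = S f f f f * ω x₁ e * ω x₂ e * ω x₃ e * ω x₄ e := by
  have h₁ (x y z w : E) : ω f e * S x y z w = ω x e * S f y z w :=
    smul_map_eq_smul_map_of_isAlt_of_map_eq_zero hω hdim ((hS.isLinearMap y z w).mk' _)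
      (he y z w) f x
  have h₂ (y z w : E) : ω f e * S f y z w = ω y e * S f f z w := by rw [hS.swap₁₂, h₁]
  have h₃ (z w : E) : ω f e * S f f z w = ω z e * S f f f w := by rw [hS.swap₂₃, h₂]
  have h₄ (w : E) : ω f e * S f f f w = ω w e * S f f f f := by rw [hS.swap₃₄, h₃]
  linear_combination ω f e ^ 3 * h₁ x₁ x₂ x₃ x₄ + ω f e ^ 2 * ω x₁ e * h₂ x₂ x₃ x₄
    + ω f e * ω x₁ e * ω x₂ e * h₃ x₃ x₄ + ω x₁ e * ω x₂ e * ω x₃ e * h₄ x₄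

end Plane

end IsSymmQuadrilinear

theorem stmt_17_general {K E : Type*} [Field K] [AddCommGroup E] [Module K E]
    (h2 : (2 : K) ≠ 0) (h3 : (3 : K) ≠ 0) {ω : E →ₗ[K] E →ₗ[K] K} (hω : ω.IsAlt)
    (hdim : Module.finrank K E = 2) {S : E → E → E → E → K} (hS : IsSymmQuadrilinear S)
    {Sop : E → E → Module.End K E} (hSop : ∀ e e' x y, ω (Sop e e' x) y = S e e' x y)
    (hinv : ∀ e e', IsAnnihilatedBy S (Sop e e')) :
    ∃ (c : K) (e : E), ∀ x₁ x₂ x₃ x₄ : E,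
      S x₁ x₂ x₃ x₄ = c * ω x₁ e * ω x₂ e * ω x₃ e * ω x₄ e := by
  by_cases hpairs : ∀ x y, S x x y y = 0
  · exact ⟨0, 0, by simp [hS.eq_zero_of_pairs_eq_zero h2 hpairs]⟩
  push Not at hpairs
  obtain ⟨x, f, hxf⟩ := hpairs
  set e := Sop x x f
  have hef : ω e f ≠ 0 := (hSop x x f f).trans_ne hxf
  have hfe : ω f e ≠ 0 := by rwa [← hω.neg, neg_ne_zero]
  have hx : x ≠ 0 := by rintro rfl; exact hxf (hS.isLinearMap 0 f f).map_zero
  have hne : ω ≠ 0 := by rintro rfl; exact hef rfl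
  have hAe : Sop x x e = 0 :=
    hS.apply_apply_eq_zero_of_isAnnihilatedBy h2 hω hdim (hSop x x) (hinv x x) hx hne f
  have hSe : ∀ y z w, S e y z w = 0 :=
    hS.apply_left_eq_zero_of_isAnnihilatedBy h2 h3 hω hdim (hinv x x) hAe hfe
  refine ⟨S f f f f / ω f e ^ 4, e, fun x₁ x₂ x₃ x₄ => ?_⟩
  have h := hS.pow_four_mul_eq_of_left_eq_zero hω hdim hSe f x₁ x₂ x₃ x₄
  field_simp
  linear_combination h

/-- If `dim_ℂ E = 2` and the symmetric quadrilinear form `S` satisfies the invariance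
condition, then `S = c · ω(·,e)⁴` for some `c ∈ ℂ` and `e ∈ E`, i.e. `S` is a fourth
power `e⁴` of a vector up to scale: the unique non-flat simply connected complex
hyper-Kähler symmetric space of dimension 4. -/
theorem stmt_17 (E : Type*) [AddCommGroup E] [Module ℂ E] [FiniteDimensional ℂ E]
    (ω : E →ₗ[ℂ] E →ₗ[ℂ] ℂ)
    (hω_alt : ∀ x : E, ω x x = 0)
    (hω_nd : ∀ x : E, (∀ y : E, ω x y = 0) → x = 0)
    (hdim : Module.finrank ℂ E = 2)
    (S : E → E → E → E → ℂ)
    (hS_lin : ∀ y z w : E, IsLinearMap ℂ (fun x => S x y z w))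
    (hS_symm : ∀ (v : Fin 4 → E) (σ : Equiv.Perm (Fin 4)),
      S (v (σ 0)) (v (σ 1)) (v (σ 2)) (v (σ 3)) = S (v 0) (v 1) (v 2) (v 3))
    (Sop : E → E → E →ₗ[ℂ] E)
    (hSop : ∀ e e' x y : E, ω (Sop e e' x) y = S e e' x y)
    (hinv : ∀ e e' x₁ x₂ x₃ x₄ : E,
      S (Sop e e' x₁) x₂ x₃ x₄ + S x₁ (Sop e e' x₂) x₃ x₄
        + S x₁ x₂ (Sop e e' x₃) x₄ + S x₁ x₂ x₃ (Sop e e' x₄) = 0) :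
    ∃ (c : ℂ) (e : E), ∀ x₁ x₂ x₃ x₄ : E,
      S x₁ x₂ x₃ x₄ = c * ω x₁ e * ω x₂ e * ω x₃ e * ω x₄ e :=
  stmt_17_general two_ne_zero three_ne_zero hω_alt hdim ⟨hS_lin, hS_symm⟩ hSop hinv
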